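/- arXiv:2411.02190 — 2 statements merged into one kernel-verified Lean document; each statement's English description precedes it below -/
import Mathlib

section
/- (Closedness of the cross-form one-form for a symplectic map) Let U ⊆ ℝ^d × ℝ^d be open and simply connected, and let u, v : U → ℝ^d be continuously differentiable. Suppose f : (p,q) ↦ (p̄,q̄) is a diffeomorphism whose graph is given in cross form by p = p̄ + u(p̄,q), q̄ = q + v(p̄,q) for (p̄,q) ∈ U, and that f preserves the standard symplectic form, i.e. Df(x)ᵀ J Df(x) = J at every point x of its domain, where J is the standard 2d×2d symplectic matrix. Then the 1-form Σ_{l=1}^d (u_l dq_l + v_l dp̄_l) on U is closed, and hence there exists s : U → ℝ with ∂s/∂q_l = u_l and ∂s/∂p̄_l = v_l for all l; in particular f is generated by the generating function p̄·q + s(p̄,q). -/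
/-!
Write `Φ x = (p̄ + u x, q)` and `Ψ x = (p̄, q + v x)` for `x = (p̄, q)`, so that `f ∘ Φ = Ψ` on `U`.
Pulling `dp ∧ dq` back along both sides and using that `f` is symplectic gives
`d(p̄ + u) ∧ dq = dp̄ ∧ d(q + v)`, that is, `d(u dq + v dp̄) = 0`.

Closed forms have primitives on balls, and two primitives differ by a locally constant function.
The local primitives are therefore the sections of a covering space of `U`, which has a global
section because `U` is simply connected.
-/

open Topology Set

section Gluing

variable {X G ι : Type*} [TopologicalSpace X] [AddGroup G]

theorem exists_continuousMap_section {E : Type*} [TopologicalSpace E] [SimplyConnectedSpace X]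
    [LocallyPathConnectedSpace X] {p : E → X} (hp : IsCoveringMap p) (e : E) :
    ∃ σ : C(X, E), ∀ x, p (σ x) = x := by
  obtain ⟨σ, ⟨-, hσ⟩, -⟩ := hp.existsUnique_continuousMap_lifts (.id X) (p e) e rfl
  exact ⟨σ, congrFun hσ⟩

/-- The bundle over `X` with fibre `G` and transition functions the translations by `g i - g j`.
When these are locally constant, it is a covering space of `X`, because `G` is discrete. Its
continuous sections are the functions that differ from each `g i` by a locally constant function
on `V i`; over `V i`, such a function `s` is recorded by `s - g i`. -/
def translationBundleCore [TopologicalSpace G] [DiscreteTopology G] (V : ι → Set X)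
    (hV : ∀ i, IsOpen (V i)) (indexAt : X → ι) (mem_indexAt : ∀ x, x ∈ V (indexAt x))
    (g : ι → X → G)
    (hg : ∀ i j, ∀ x ∈ V i ∩ V j, ∀ᶠ y in 𝓝 x, g i y - g j y = g i x - g j x) :
    FiberBundleCore ι X G where
  baseSet := V
  isOpen_baseSet := hV
  indexAt := indexAt
  mem_baseSet_at := mem_indexAt
  coordChange i j x a := a + (g i x - g j x)
  coordChange_self i x _ a := by rw [sub_self, add_zero]
  continuousOn_coordChange i j := by
    rintro ⟨x, a⟩ ⟨hx, -⟩
    have hconst : ContinuousAt (fun y => g i y - g j y) x :=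
      continuousAt_const.congr ((hg i j x hx).mono fun _ hy => hy.symm)
    exact (continuousAt_snd.add (hconst.comp_of_eq continuousAt_fst rfl)).continuousWithinAt
  coordChange_comp i j k x _ a := by rw [add_assoc, sub_add_sub_cancel]

theorem exists_eventually_sub_eq_of_eventually_sub_eq [SimplyConnectedSpace X]
    [LocallyPathConnectedSpace X] {V : ι → Set X} (hV : ∀ i, IsOpen (V i))
    (hcover : ∀ x, ∃ i, x ∈ V i) {g : ι → X → G}
    (hg : ∀ i j, ∀ x ∈ V i ∩ V j, ∀ᶠ y in 𝓝 x, g i y - g j y = g i x - g j x) :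
    ∃ s : X → G, ∀ i, ∀ x ∈ V i, ∀ᶠ y in 𝓝 x, s y - g i y = s x - g i x := by
  let _ : TopologicalSpace G := ⊥
  have : DiscreteTopology G := ⟨rfl⟩
  choose indexAt mem_indexAt using hcover
  let Z := translationBundleCore V hV indexAt mem_indexAt g hg
  have hcov : IsCoveringMap Z.proj := FiberBundle.isCoveringMap (F := G) (E := Z.Fiber)
  obtain ⟨x₀⟩ : Nonempty X := inferInstance
  obtain ⟨σ, hσ⟩ := exists_continuousMap_section hcov ⟨x₀, (0 : G)⟩
  let a : X → G := fun x => (σ x).2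
  let s : X → G := fun x => a x + g (indexAt x) x
  have hs (i : ι) (y : X) : (Z.localTriv i (σ y)).2 = s y - g i y := by
    calc (Z.localTriv i (σ y)).2
        = a y + (g (indexAt (Z.proj (σ y))) (Z.proj (σ y)) - g i (Z.proj (σ y))) := rfl
      _ = a y + (g (indexAt y) y - g i y) := by rw [hσ y]
      _ = s y - g i y := (add_sub_assoc _ _ _).symm
  refine ⟨s, fun i x hx => ?_⟩
  have hsource : σ x ∈ (Z.localTriv i).source :=
    (Z.mem_localTriv_source i _).2 (show Z.proj (σ x) ∈ V i by rwa [hσ x])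
  have hcont : ContinuousAt (fun y => (Z.localTriv i (σ y)).2) x :=
    (((Z.localTriv i).continuousAt hsource).comp σ.continuous.continuousAt).snd
  simp only [hs] at hcont
  exact hcont.eventually_mem (mem_nhds_discrete.2 rfl : {s x - g i x} ∈ 𝓝 (s x - g i x))

end Gluing

section Primitive

variable {E F : Type*} [NormedAddCommGroup E] [NormedSpace ℝ E] [NormedAddCommGroup F]
  [NormedSpace ℝ F] {ω : E → E →L[ℝ] F} {U : Set E}

theorem eventually_sub_eq_of_eventually_hasFDerivAt {g h : E → F} {x : E}
    (hg : ∀ᶠ y in 𝓝 x, HasFDerivAt g (ω y) y) (hh : ∀ᶠ y in 𝓝 x, HasFDerivAt h (ω y) y) :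
    ∀ᶠ y in 𝓝 x, g y - h y = g x - h x := by
  obtain ⟨r, hr, hball⟩ := Metric.eventually_nhds_iff_ball.1 (hg.and hh)
  have hderiv : ∀ y ∈ Metric.ball x r, HasFDerivAt (g - h) (0 : E →L[ℝ] F) y := fun y hy => by
    simpa only [sub_self] using (hball y hy).1.sub (hball y hy).2
  filter_upwards [Metric.ball_mem_nhds x hr] with y hy
  exact Metric.isOpen_ball.is_const_of_fderiv_eq_zero (convex_ball x r).isPreconnected
    (fun z hz => (hderiv z hz).differentiableAt.differentiableWithinAt)
    (fun z hz => (hderiv z hz).fderiv) hy (Metric.mem_ball_self hr)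

theorem exists_forall_hasFDerivAt_of_locally (hU : IsOpen U) [SimplyConnectedSpace U]
    (hω : ∀ x ∈ U, ∃ g : E → F, ∀ᶠ y in 𝓝 x, HasFDerivAt g (ω y) y) :
    ∃ s : E → F, ∀ x ∈ U, HasFDerivAt s (ω x) x := by
  have : LocallyPathConnectedSpace U := hU.locallyPathConnectedSpace
  have eventually_coe {x : U} {p : E → Prop} : (∀ᶠ y : U in 𝓝 x, p y) ↔ ∀ᶠ y in 𝓝 (x : E), p y := by
    rw [← hU.isOpenEmbedding_subtypeVal.map_nhds_eq, Filter.eventually_map]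
  choose! g hg using hω
  obtain ⟨s, hs⟩ := exists_eventually_sub_eq_of_eventually_sub_eq (X := U) (ι := U)
    (V := fun i => Subtype.val ⁻¹' {x | ∀ᶠ y in 𝓝 x, HasFDerivAt (g i) (ω y) y})
    (fun _ => isOpen_setOfPred_eventually_nhds.preimage continuous_subtype_val)
    (fun x => ⟨x, hg x x.2⟩) (g := fun i x => g i x)
    (fun i j x hx => eventually_coe.2 (eventually_sub_eq_of_eventually_hasFDerivAt hx.1 hx.2))
  let t : E → F := Function.extend Subtype.val s 0
  have ht (x : U) : t x = s x := Subtype.val_injective.extend_apply s 0 x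
  refine ⟨t, fun x hx => ?_⟩
  have hdiff : ∀ᶠ y in 𝓝 x, t y - g x y = s ⟨x, hx⟩ - g x x :=
    eventually_coe (x := ⟨x, hx⟩).1 (by simpa only [ht] using hs ⟨x, hx⟩ ⟨x, hx⟩ (hg x hx))
  refine ((hg x hx).self_of_nhds.add_const (s ⟨x, hx⟩ - g x x)).congr_of_eventuallyEq ?_
  exact hdiff.mono fun y hy => sub_eq_iff_eq_add'.1 hy

theorem exists_forall_hasFDerivAt_of_fderiv_symmetric [CompleteSpace F] (hU : IsOpen U)
    [SimplyConnectedSpace U] (hω : DifferentiableOn ℝ ω U)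
    (hsymm : ∀ x ∈ U, ∀ w₁ w₂, fderiv ℝ ω x w₁ w₂ = fderiv ℝ ω x w₂ w₁) :
    ∃ s : E → F, ∀ x ∈ U, HasFDerivAt s (ω x) x := by
  refine exists_forall_hasFDerivAt_of_locally hU fun x hx => ?_
  obtain ⟨r, hr, hball⟩ := Metric.isOpen_iff.1 hU x hx
  obtain ⟨g, hg⟩ := (convex_ball x r).exists_forall_hasFDerivAt_of_fderiv_symmetric
    Metric.isOpen_ball (hω.mono hball) (fun y hy => hsymm y (hball hy))
  exact ⟨g, Filter.eventually_of_mem (Metric.ball_mem_nhds x hr) hg⟩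

end Primitive

section CrossForm

variable {𝕜 P Q W : Type*} [NontriviallyNormedField 𝕜] [NormedAddCommGroup P] [NormedSpace 𝕜 P]
  [NormedAddCommGroup Q] [NormedSpace 𝕜 Q] [NormedAddCommGroup W] [NormedSpace 𝕜 W]
  (B : P →L[𝕜] Q →L[𝕜] W)

/-- The two-form `dp ∧ dq` on `P × Q`, where momenta are paired with positions by `B`; the
standard symplectic form is the case of the dot product on `ℝ^d`. -/
def canonicalTwoForm (w₁ w₂ : P × Q) : W :=
  B w₁.1 w₂.2 - B w₂.1 w₁.2

/-- The one-form `u dq + v dp̄` on `P × Q` attached to the cross form `p = p̄ + u(p̄, q)`,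
`q̄ = q + v(p̄, q)`, where momenta are paired with positions by `B`. -/
noncomputable def crossOneForm (u : P × Q → P) (v : P × Q → Q) (x : P × Q) : P × Q →L[𝕜] W :=
  (B (u x)).comp (.snd 𝕜 P Q) + (B.flip (v x)).comp (.fst 𝕜 P Q)

theorem crossOneForm_apply (u : P × Q → P) (v : P × Q → Q) (x w : P × Q) :
    crossOneForm B u v x w = B (u x) w.2 + B w.1 (v x) :=
  rfl

variable {u : P × Q → P} {v : P × Q → Q} {x : P × Q} {f : P × Q → P × Q}
  {u' : P × Q →L[𝕜] P} {v' : P × Q →L[𝕜] Q} {f' : P × Q →L[𝕜] P × Q}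

theorem hasFDerivAt_crossOneForm (hu : HasFDerivAt u u' x) (hv : HasFDerivAt v v' x) :
    HasFDerivAt (crossOneForm B u v)
      (((ContinuousLinearMap.compL 𝕜 (P × Q) Q W).flip (.snd 𝕜 P Q)).comp (B.comp u') +
        ((ContinuousLinearMap.compL 𝕜 (P × Q) P W).flip (.fst 𝕜 P Q)).comp (B.flip.comp v')) x :=
  (((ContinuousLinearMap.compL 𝕜 (P × Q) Q W).flip (.snd 𝕜 P Q)).hasFDerivAt.comp x
      (B.hasFDerivAt.comp x hu)).add
    (((ContinuousLinearMap.compL 𝕜 (P × Q) P W).flip (.fst 𝕜 P Q)).hasFDerivAt.comp x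
      (B.flip.hasFDerivAt.comp x hv))

theorem fderiv_crossOneForm_apply (hu : DifferentiableAt 𝕜 u x) (hv : DifferentiableAt 𝕜 v x)
    (w₁ w₂ : P × Q) :
    fderiv 𝕜 (crossOneForm B u v) x w₁ w₂ =
      B (fderiv 𝕜 u x w₁) w₂.2 + B w₂.1 (fderiv 𝕜 v x w₁) := by
  rw [(hasFDerivAt_crossOneForm B hu.hasFDerivAt hv.hasFDerivAt).fderiv]
  rfl

theorem canonicalTwoForm_add_fst_eq_add_snd_iff (w₁ w₂ : P × Q) (a₁ a₂ : P) (b₁ b₂ : Q) :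
    canonicalTwoForm B (w₁.1, w₁.2 + b₁) (w₂.1, w₂.2 + b₂) =
        canonicalTwoForm B (w₁.1 + a₁, w₁.2) (w₂.1 + a₂, w₂.2) ↔
      B a₁ w₂.2 + B w₂.1 b₁ = B a₂ w₁.2 + B w₁.1 b₂ := by
  simp only [canonicalTwoForm, map_add, add_apply]
  rw [← sub_eq_zero, ← sub_eq_zero (a := B a₁ w₂.2 + _), ← neg_eq_zero]
  refine Eq.congr ?_ rfl
  abel

theorem map_add_fst_eq_add_snd_of_crossForm (hu : HasFDerivAt u u' x) (hv : HasFDerivAt v v' x)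
    (hf : HasFDerivAt f f' (x.1 + u x, x.2))
    (hcross : ∀ᶠ y in 𝓝 x, f (y.1 + u y, y.2) = (y.1, y.2 + v y)) (w : P × Q) :
    f' (w.1 + u' w, w.2) = (w.1, w.2 + v' w) := by
  have hΦ : HasFDerivAt (fun y : P × Q => (y.1 + u y, y.2))
      ((.fst 𝕜 P Q + u').prod (.snd 𝕜 P Q)) x :=
    (hasFDerivAt_fst.add hu).prodMk hasFDerivAt_snd
  have hΨ : HasFDerivAt (fun y : P × Q => (y.1, y.2 + v y))
      ((ContinuousLinearMap.fst 𝕜 P Q).prod (.snd 𝕜 P Q + v')) x :=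
    hasFDerivAt_fst.prodMk (hasFDerivAt_snd.add hv)
  exact DFunLike.congr_fun ((hf.comp x hΦ).unique (hΨ.congr_of_eventuallyEq hcross)) w

theorem symmetric_of_crossForm_of_canonicalTwoForm_eq (hu : HasFDerivAt u u' x)
    (hv : HasFDerivAt v v' x) (hf : HasFDerivAt f f' (x.1 + u x, x.2))
    (hcross : ∀ᶠ y in 𝓝 x, f (y.1 + u y, y.2) = (y.1, y.2 + v y))
    (hsympl : ∀ w₁ w₂, canonicalTwoForm B (f' w₁) (f' w₂) = canonicalTwoForm B w₁ w₂)
    (w₁ w₂ : P × Q) :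
    B (u' w₁) w₂.2 + B w₂.1 (v' w₁) = B (u' w₂) w₁.2 + B w₁.1 (v' w₂) := by
  have hmap := map_add_fst_eq_add_snd_of_crossForm hu hv hf hcross
  rw [← canonicalTwoForm_add_fst_eq_add_snd_iff, ← hmap, ← hmap, hsympl]

end CrossForm

theorem cross_form_one_form_closed_and_exact_general {P Q W : Type*} [NormedAddCommGroup P]
    [NormedSpace ℝ P] [NormedAddCommGroup Q] [NormedSpace ℝ Q] [NormedAddCommGroup W]
    [NormedSpace ℝ W] [CompleteSpace W] (B : P →L[ℝ] Q →L[ℝ] W)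
    {U : Set (P × Q)} (hU : IsOpen U) [SimplyConnectedSpace U]
    {u : P × Q → P} {v : P × Q → Q} (hu : DifferentiableOn ℝ u U) (hv : DifferentiableOn ℝ v U)
    {f : P × Q → P × Q} (hf : ∀ x ∈ U, DifferentiableAt ℝ f (x.1 + u x, x.2))
    (hcross : ∀ x ∈ U, f (x.1 + u x, x.2) = (x.1, x.2 + v x))
    (hsympl : ∀ x ∈ U, ∀ w₁ w₂,
      canonicalTwoForm B (fderiv ℝ f (x.1 + u x, x.2) w₁) (fderiv ℝ f (x.1 + u x, x.2) w₂) =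
        canonicalTwoForm B w₁ w₂) :
    (∀ x ∈ U, ∀ w₁ w₂ : P × Q,
      B (fderiv ℝ u x w₁) w₂.2 + B w₂.1 (fderiv ℝ v x w₁) =
        B (fderiv ℝ u x w₂) w₁.2 + B w₁.1 (fderiv ℝ v x w₂)) ∧
    ∃ s : P × Q → W, ∀ x ∈ U, HasFDerivAt s (crossOneForm B u v x) x := by
  have hu' (x) (hx : x ∈ U) : DifferentiableAt ℝ u x := hu.differentiableAt (hU.mem_nhds hx)
  have hv' (x) (hx : x ∈ U) : DifferentiableAt ℝ v x := hv.differentiableAt (hU.mem_nhds hx)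
  have hclosed (x) (hx : x ∈ U) := symmetric_of_crossForm_of_canonicalTwoForm_eq B
    (hu' x hx).hasFDerivAt (hv' x hx).hasFDerivAt (hf x hx).hasFDerivAt
    (Filter.eventually_of_mem (hU.mem_nhds hx) hcross) (hsympl x hx)
  refine ⟨hclosed, exists_forall_hasFDerivAt_of_fderiv_symmetric hU (fun x hx => ?_) ?_⟩
  · exact (hasFDerivAt_crossOneForm B (hu' x hx).hasFDerivAt
      (hv' x hx).hasFDerivAt).differentiableAt.differentiableWithinAt
  · intro x hx w₁ w₂
    simpa only [fderiv_crossOneForm_apply B (hu' x hx) (hv' x hx)] using hclosed x hx w₁ w₂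

section DotProduct

variable {ι : Type*} [Fintype ι]

variable (ι) in
/-- The dot product on `ℝ^ι` as a continuous bilinear pairing of momenta with positions. -/
noncomputable def dotPairing : (ι → ℝ) →L[ℝ] (ι → ℝ) →L[ℝ] ℝ :=
  (dotProductBilin ℝ ℝ).toContinuousBilinearMap

theorem dotPairing_apply (a b : ι → ℝ) : dotPairing ι a b = ∑ i, a i * b i :=
  rfl

theorem canonicalTwoForm_dotPairing (w₁ w₂ : (ι → ℝ) × (ι → ℝ)) :
    canonicalTwoForm (dotPairing ι) w₁ w₂ = ∑ i, (w₁.1 i * w₂.2 i - w₁.2 i * w₂.1 i) := by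
  simp only [canonicalTwoForm, dotPairing_apply, Finset.sum_sub_distrib, mul_comm]

theorem dotPairing_add_dotPairing (a b c d : ι → ℝ) :
    dotPairing ι a b + dotPairing ι c d = ∑ i, (d i * c i + a i * b i) := by
  simp only [dotPairing_apply, Finset.sum_add_distrib, mul_comm, add_comm]

variable [DecidableEq ι] (u v : (ι → ℝ) × (ι → ℝ) → ι → ℝ) (x : (ι → ℝ) × (ι → ℝ)) (i : ι)

theorem crossOneForm_dotPairing_zero_single :
    crossOneForm (dotPairing ι) u v x (0, Pi.single i 1) = u x i := by
  simp [crossOneForm_apply, dotPairing_apply, Pi.single_apply]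

theorem crossOneForm_dotPairing_single_zero :
    crossOneForm (dotPairing ι) u v x (Pi.single i 1, 0) = v x i := by
  simp [crossOneForm_apply, dotPairing_apply, Pi.single_apply]

end DotProduct

/-- **Closedness of the cross-form one-form for a symplectic map.**
`U ⊆ ℝ^d × ℝ^d` open and simply connected, `u, v : U → ℝ^d` continuously differentiable.
If the diffeomorphism `f : (p,q) ↦ (p̄,q̄)` is given in cross form by
`p = p̄ + u(p̄,q)`, `q̄ = q + v(p̄,q)` for `(p̄,q) ∈ U`, and `f` preserves the standard
symplectic form on its domain `Ω`, then the 1-form `Σ_l (u_l dq_l + v_l dp̄_l)` on `U`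
is closed (symmetry of its derivative), and there exists `s : U → ℝ` with
`∂s/∂q_l = u_l` and `∂s/∂p̄_l = v_l`; i.e. `f` has generating function `p̄·q + s(p̄,q)`. -/
theorem cross_form_one_form_closed_and_exact (d : ℕ) (hd : 1 ≤ d)
    (U : Set ((Fin d → ℝ) × (Fin d → ℝ))) (hUopen : IsOpen U)
    (hUsc : SimplyConnectedSpace U)
    (u v : (Fin d → ℝ) × (Fin d → ℝ) → Fin d → ℝ)
    (hu : ContDiffOn ℝ 1 u U) (hv : ContDiffOn ℝ 1 v U)
    (Ω : Set ((Fin d → ℝ) × (Fin d → ℝ)))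
    (hΩ : Ω = (fun x : (Fin d → ℝ) × (Fin d → ℝ) => (x.1 + u x, x.2)) '' U)
    (f : (Fin d → ℝ) × (Fin d → ℝ) → (Fin d → ℝ) × (Fin d → ℝ))
    (hfdiff : ∀ x ∈ Ω, DifferentiableAt ℝ f x)
    (hfbij : Set.BijOn f Ω ((fun x : (Fin d → ℝ) × (Fin d → ℝ) => (x.1, x.2 + v x)) '' U))
    (hcross : ∀ x ∈ U, f (x.1 + u x, x.2) = (x.1, x.2 + v x))
    (hsympl : ∀ x ∈ Ω, ∀ w₁ w₂ : (Fin d → ℝ) × (Fin d → ℝ),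
      ∑ i, ((fderiv ℝ f x w₁).1 i * (fderiv ℝ f x w₂).2 i -
            (fderiv ℝ f x w₁).2 i * (fderiv ℝ f x w₂).1 i)
        = ∑ i, (w₁.1 i * w₂.2 i - w₁.2 i * w₂.1 i)) :
    (∀ x ∈ U, ∀ w₁ w₂ : (Fin d → ℝ) × (Fin d → ℝ),
      ∑ i, (fderiv ℝ v x w₁ i * w₂.1 i + fderiv ℝ u x w₁ i * w₂.2 i)
        = ∑ i, (fderiv ℝ v x w₂ i * w₁.1 i + fderiv ℝ u x w₂ i * w₁.2 i)) ∧
    ∃ s : (Fin d → ℝ) × (Fin d → ℝ) → ℝ, ∀ x ∈ U,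
      DifferentiableAt ℝ s x ∧
      (∀ i, fderiv ℝ s x (0, Pi.single i 1) = u x i) ∧
      (∀ i, fderiv ℝ s x (Pi.single i 1, 0) = v x i) := by
  subst hΩ
  obtain ⟨hclosed, s, hs⟩ := cross_form_one_form_closed_and_exact_general (dotPairing (Fin d))
    hUopen (hu.differentiableOn one_ne_zero) (hv.differentiableOn one_ne_zero)
    (fun x hx => hfdiff _ ⟨x, hx, rfl⟩) hcross
    (fun x hx => by simpa only [canonicalTwoForm_dotPairing] using hsympl _ ⟨x, hx, rfl⟩)
  refine ⟨by simpa only [dotPairing_add_dotPairing] using hclosed, s, fun x hx => ?_⟩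
  rw [(hs x hx).fderiv]
  exact ⟨(hs x hx).differentiableAt, crossOneForm_dotPairing_zero_single u v x,
    crossOneForm_dotPairing_single_zero u v x⟩
end

section
/- (Confinement of iterates of the interpolated family) Let ε = sup_{(P,q)∈D} max(|∂_P S(P,q)|, |∂_q S(P,q)|) and, for complex μ, let f_μ be the map defined implicitly by the generating function P·q + μS(P,q), i.e. p = P + μ ∂_q S(P,q), Q = q + μ ∂_P S(P,q). Then for every x₀ ∈ D₁, every k ∈ ℕ with k ≥ 1, and every complex μ with |μ| ≤ μ_k := δ/(2ε(k+d)), the iterates x_j = f_μ^j(x₀) are well defined and lie in D for 0 ≤ j ≤ k, and satisfy |x_j − x_{j−1}| ≤ |μ| ε for 1 ≤ j ≤ k. -/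
/-- Complex phase space `ℂ^d × ℂ^d ≅ ℂ^{2d}` with the sup norm. -/
abbrev CPhase (d : ℕ) := (Fin d → ℂ) × (Fin d → ℂ)

/-- Partial gradient `∂_P S` of `S` in the first block of `d` variables. -/
noncomputable def pGrad (d : ℕ) (S : CPhase d → ℂ) (x : CPhase d) : Fin d → ℂ :=
  fun i => fderiv ℂ S x (Pi.single i 1, 0)

/-- Partial gradient `∂_q S` of `S` in the second block of `d` variables. -/
noncomputable def qGrad (d : ℕ) (S : CPhase d → ℂ) (x : CPhase d) : Fin d → ℂ :=
  fun i => fderiv ℂ S x (0, Pi.single i 1)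

/-!
Finding `f_μ(x)` means solving `P + μ ∂_q S(P, q) = p` for `P`, where `x = (p, q)`. With
`r = |μ| ε`, the map `P ↦ p - μ ∂_q S(P, q)` sends the ball of radius `r` about `p` into itself, and
as long as the ball of radius `2r` about `x` stays in `D`, Cauchy's estimate on balls of radius `r`
bounds its derivative by `1`. A nonexpansive self-map of a compact convex set has a fixed point, so
the step exists, and it has length at most `r`. After fewer than `k` steps the orbit is within
`(k - 1) r` of `x₀`, so the condition on the ball of radius `2r` holds when `(k + 1) r ≤ δ / 2`.
-/

open Metric Set Bornology

section CauchyEstimate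

variable {E F : Type*} [NormedAddCommGroup E] [NormedSpace ℂ E]
  [NormedAddCommGroup F] [NormedSpace ℂ F]

lemma norm_fderiv_le_div_of_forall_mem_closedBall_norm_le {f : E → F} {c : E} {R C : ℝ}
    (hR : 0 < R) (hf : ∀ z ∈ closedBall c R, DifferentiableAt ℂ f z)
    (hC : ∀ z ∈ closedBall c R, ‖f z‖ ≤ C) : ‖fderiv ℂ f c‖ ≤ C / R := by
  have hC₀ : 0 ≤ C := (norm_nonneg _).trans (hC c (mem_closedBall_self hR.le))
  refine ContinuousLinearMap.opNorm_le_of_unit_norm (div_nonneg hC₀ hR.le) fun v hv ↦ ?_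
  have hline : MapsTo (fun w : ℂ ↦ c + w • v) (closedBall 0 R) (closedBall c R) := by
    intro w hw
    simpa [norm_smul, hv] using hw
  have hderiv : ∀ w ∈ closedBall (0 : ℂ) R,
      HasDerivAt (fun w : ℂ ↦ f (c + w • v)) (fderiv ℂ f (c + w • v) v) w := by
    intro w hw
    have hv' : HasDerivAt (fun w : ℂ ↦ c + w • v) v w := by
      simpa only [id, one_smul] using ((hasDerivAt_id w).smul_const v).const_add c
    exact (hf _ (hline hw)).hasFDerivAt.comp_hasDerivAt w hv'
  have hcl : DiffContOnCl ℂ (fun w : ℂ ↦ f (c + w • v)) (ball 0 R) :=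
    DifferentiableOn.diffContOnCl_ball
      (fun w hw ↦ (hderiv w hw).differentiableAt.differentiableWithinAt) subset_rfl
  have hcauchy := Complex.norm_deriv_le_of_forall_mem_sphere_norm_le hR hcl
    fun w hw ↦ hC _ (hline (sphere_subset_closedBall hw))
  simpa only [(hderiv 0 (mem_closedBall_self hR.le)).deriv, zero_smul, add_zero] using hcauchy

lemma lipschitzOnWith_of_forall_mem_closedBall_norm_le {f : E → F} {c : E} {ρ R C : ℝ}
    (hR : 0 < R) (hf : ∀ z ∈ closedBall c (ρ + R), DifferentiableAt ℂ f z)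
    (hC : ∀ z ∈ closedBall c (ρ + R), ‖f z‖ ≤ C) :
    LipschitzOnWith (C / R).toNNReal f (closedBall c ρ) := by
  have hsub : ∀ z ∈ closedBall c ρ, closedBall z R ⊆ closedBall c (ρ + R) := fun z hz ↦
    closedBall_subset_closedBall' (by linarith [mem_closedBall.1 hz])
  refine (convex_closedBall c ρ).lipschitzOnWith_of_nnnorm_fderiv_le (𝕜 := ℂ)
    (fun z hz ↦ hf z (hsub z hz (mem_closedBall_self hR.le))) fun z hz ↦ ?_
  exact NNReal.le_toNNReal_of_coe_le <| norm_fderiv_le_div_of_forall_mem_closedBall_norm_le hR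
    (fun w hw ↦ hf w (hsub z hz hw)) fun w hw ↦ hC w (hsub z hz hw)

end CauchyEstimate

section FixedPoint

variable {E : Type*} [NormedAddCommGroup E] [NormedSpace ℝ E] {s : Set E} {f : E → E} {a : E}

lemma exists_dist_map_self_le_of_lipschitzOnWith_one (hs : IsComplete s) (hbdd : IsBounded s)
    (hstar : StarConvex ℝ a s) (ha : a ∈ s) (hmaps : MapsTo f s s) (hf : LipschitzOnWith 1 f s)
    {ε : ℝ} (hε : 0 < ε) : ∃ x ∈ s, dist (f x) x ≤ ε := by
  obtain ⟨C, hC⟩ := hbdd.subset_closedBall a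
  have hC₀ : 0 ≤ C := dist_nonneg.trans (hC ha)
  -- `f` displaces the fixed point `x` of the contraction `x ↦ a + t (f x - a)` by
  -- `(1 - t) ‖f x - a‖ ≤ (1 - t) C`, which is at most `ε` for this `t`.
  let t : ℝ := C / (C + ε)
  have ht₀ : 0 ≤ t := by positivity
  have ht₁ : t < 1 := (div_lt_one (by positivity)).2 (lt_add_of_pos_right C hε)
  let g : E → E := fun x ↦ AffineMap.lineMap a (f x) t
  have hg : MapsTo g s s := by
    intro x hx
    simpa only [g, AffineMap.lineMap_apply_module', add_comm] using
      hstar.add_smul_sub_mem (hmaps hx) ht₀ ht₁.le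
  have hcontr : ContractingWith ⟨t, ht₀⟩ (hg.restrict g s s) := by
    refine ⟨ht₁, LipschitzWith.of_dist_le_mul ?_⟩
    rintro ⟨x, hx⟩ ⟨y, hy⟩
    calc dist (g x) (g y) = t * dist (f x) (f y) := by
          simp [g, AffineMap.lineMap_apply_module', dist_smul₀, abs_of_nonneg ht₀]
      _ ≤ t * dist x y := by
          gcongr
          simpa using hf.dist_le_mul x hx y hy
  obtain ⟨x, hx, hfix, -⟩ := hcontr.exists_fixedPoint' hs hg ha (edist_ne_top _ _)
  refine ⟨x, hx, ?_⟩
  calc dist (f x) x = dist (f x) (g x) := by rw [hfix.eq]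
    _ = (1 - t) * dist (f x) a := by
        rw [dist_right_lineMap, Real.norm_of_nonneg (sub_nonneg.2 ht₁.le), dist_comm]
    _ ≤ (1 - t) * C :=
        mul_le_mul_of_nonneg_left (hC (hmaps hx)) (sub_nonneg.2 ht₁.le)
    _ = ε * t := by simp only [t]; field_simp; ring
    _ ≤ ε := mul_le_of_le_one_right hε.le ht₁.le

lemma exists_isFixedPt_of_lipschitzOnWith_one (hs : IsCompact s) (hstar : StarConvex ℝ a s)
    (ha : a ∈ s) (hmaps : MapsTo f s s) (hf : LipschitzOnWith 1 f s) :
    ∃ x ∈ s, Function.IsFixedPt f x := by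
  have hcont : ContinuousOn (fun x ↦ dist (f x) x) s :=
    continuous_dist.comp_continuousOn (hf.continuousOn.prodMk continuousOn_id)
  obtain ⟨x, hx, hmin⟩ := hs.exists_isMinOn ⟨a, ha⟩ hcont
  refine ⟨x, hx, dist_le_zero.1 (le_of_forall_pos_le_add fun ε hε ↦ ?_)⟩
  obtain ⟨y, hy, hyε⟩ := exists_dist_map_self_le_of_lipschitzOnWith_one hs.isComplete
    hs.isBounded hstar ha hmaps hf hε
  rw [zero_add]
  exact (hmin hy).trans hyε

end FixedPoint

lemma exists_add_eq_of_forall_mem_closedBall_norm_le {E : Type*} [NormedAddCommGroup E]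
    [NormedSpace ℂ E] [FiniteDimensional ℂ E] {F : E → E} {p : E} {r : ℝ} (hr : 0 ≤ r)
    (hF : ∀ P ∈ closedBall p (2 * r), DifferentiableAt ℂ F P)
    (hb : ∀ P ∈ closedBall p (2 * r), ‖F P‖ ≤ r) :
    ∃ P ∈ closedBall p r, P + F P = p := by
  rcases hr.eq_or_lt with rfl | hr
  · exact ⟨p, by simp, by simpa using hb p (by simp)⟩
  have : ProperSpace E := FiniteDimensional.proper ℂ E
  have hmaps : MapsTo (fun P ↦ p - F P) (closedBall p r) (closedBall p r) := fun P hP ↦ by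
    simpa using hb P (closedBall_subset_closedBall (by linarith) hP)
  have hlip : LipschitzOnWith 1 (fun P ↦ p - F P) (closedBall p r) := by
    rw [two_mul] at hF hb
    have hFlip := lipschitzOnWith_of_forall_mem_closedBall_norm_le hr hF hb
    rw [div_self hr.ne', Real.toNNReal_one] at hFlip
    exact LipschitzOnWith.of_dist_le_mul fun P hP Q hQ ↦ by
      simpa only [dist_sub_left] using hFlip.dist_le_mul P hP Q hQ
  have hp : p ∈ closedBall p r := mem_closedBall_self hr.le
  obtain ⟨P, hP, hfix⟩ := exists_isFixedPt_of_lipschitzOnWith_one (isCompact_closedBall p r)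
    ((convex_closedBall p r).starConvex hp) hp hmaps hlip
  exact ⟨P, hP, eq_sub_iff_add_eq.1 hfix.symm⟩

lemma closedBall_subset_cthickening_add {X : Type*} [PseudoMetricSpace X] {s : Set X} {x : X}
    {a b : ℝ} (ha : 0 ≤ a) (hb : 0 ≤ b) (hx : x ∈ cthickening a s) :
    closedBall x b ⊆ cthickening (b + a) s :=
  (closedBall_subset_cthickening hx b).trans (cthickening_cthickening_subset hb ha s)

lemma exists_orbit_of_forall_exists_mem_closedBall {X : Type*} [PseudoMetricSpace X]
    {R : X → X → Prop} {x₀ : X} {r : ℝ} {k : ℕ}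
    (hstep : ∀ j < k, ∀ x ∈ closedBall x₀ (j * r), ∃ y ∈ closedBall x r, R x y) :
    ∃ x : ℕ → X, x 0 = x₀ ∧ ∀ j < k, x (j + 1) ∈ closedBall x₀ ((j + 1) * r) ∧
      x (j + 1) ∈ closedBall (x j) r ∧ R (x j) (x (j + 1)) := by
  have : Nonempty X := ⟨x₀⟩
  choose! f hfr hfR using hstep
  let x : ℕ → X := fun n ↦ Nat.rec x₀ f n
  have hx : ∀ j ≤ k, x j ∈ closedBall x₀ (j * r) := by
    intro j
    induction j with
    | zero => simp [x]
    | succ j ih =>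
      intro hj
      have hxj := ih (Nat.le_of_succ_le hj)
      refine closedBall_subset_closedBall' ?_ (hfr j hj (x j) hxj)
      push_cast
      linarith [mem_closedBall.1 hxj]
  refine ⟨x, rfl, fun j hj ↦ ⟨mod_cast hx (j + 1) hj, ?_⟩⟩
  exact ⟨hfr j hj _ (hx j hj.le), hfR j hj _ (hx j hj.le)⟩

section GeneratingFunction

variable {d : ℕ} {D : Set (CPhase d)} {S : CPhase d → ℂ} {μ : ℂ} {ε : ℝ}

/-- The relation `y = f_μ(x)`, where `f_μ` is the map with generating function `P·q + μ S(P, q)`;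
here `x = (p, q)` and `y = (P, Q)`. The equations are only meaningful at points `(P, q)` of the
domain `D` of `S`, so membership in `D` is part of the relation. -/
def GeneratingStep (D : Set (CPhase d)) (S : CPhase d → ℂ) (μ : ℂ) (x y : CPhase d) : Prop :=
  (y.1, x.2) ∈ D ∧ x.1 = y.1 + μ • qGrad d S (y.1, x.2) ∧
    y.2 = x.2 + μ • pGrad d S (y.1, x.2)

lemma analyticOnNhd_qGrad (hS : AnalyticOnNhd ℂ S D) : AnalyticOnNhd ℂ (qGrad d S) D := by
  intro x hx
  rw [analyticAt_pi_iff]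
  intro i
  exact (ContinuousLinearMap.apply ℂ ℂ _).analyticAt _ |>.comp (hS x hx).fderiv

lemma exists_generatingStep (hε : 0 ≤ ε) (hS : AnalyticOnNhd ℂ S D)
    (hεub : ∀ x ∈ D, max ‖pGrad d S x‖ ‖qGrad d S x‖ ≤ ε) {x : CPhase d}
    (hx : closedBall x (2 * (‖μ‖ * ε)) ⊆ D) :
    ∃ y ∈ closedBall x (‖μ‖ * ε), GeneratingStep D S μ x y := by
  have hr : 0 ≤ ‖μ‖ * ε := by positivity
  have hmem : ∀ P ∈ closedBall x.1 (2 * (‖μ‖ * ε)), (P, x.2) ∈ D := by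
    intro P hP
    refine hx ?_
    rw [← closedBall_prod_same]
    exact ⟨hP, mem_closedBall_self (by positivity)⟩
  have hdiff : ∀ P ∈ closedBall x.1 (2 * (‖μ‖ * ε)),
      DifferentiableAt ℂ (fun P ↦ μ • qGrad d S (P, x.2)) P := by
    intro P hP
    have hq := (analyticOnNhd_qGrad hS _ (hmem P hP)).differentiableAt
    exact (hq.comp P (by fun_prop : DifferentiableAt ℂ (fun P ↦ (P, x.2)) P)).const_smul μ
  have hbound : ∀ P ∈ closedBall x.1 (2 * (‖μ‖ * ε)), ‖μ • qGrad d S (P, x.2)‖ ≤ ‖μ‖ * ε := by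
    intro P hP
    rw [norm_smul]
    gcongr
    exact (le_max_right _ _).trans (hεub _ (hmem P hP))
  obtain ⟨P, hP, hfix⟩ := exists_add_eq_of_forall_mem_closedBall_norm_le hr hdiff hbound
  have hPD : (P, x.2) ∈ D := hmem P (closedBall_subset_closedBall (by linarith) hP)
  refine ⟨(P, x.2 + μ • pGrad d S (P, x.2)), ?_, hPD, hfix.symm, rfl⟩
  rw [← closedBall_prod_same]
  refine ⟨hP, ?_⟩
  rw [mem_closedBall, dist_self_add_left, norm_smul]
  gcongr
  exact (le_max_left _ _).trans (hεub _ hPD)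

theorem confinement_of_iterates_interpolated_family_general (hε : 0 ≤ ε)
    (hS : AnalyticOnNhd ℂ S D) (hεub : ∀ x ∈ D, max ‖pGrad d S x‖ ‖qGrad d S x‖ ≤ ε)
    {x₀ : CPhase d} {R : ℝ} (hball : closedBall x₀ R ⊆ D) {k : ℕ}
    (hμ : (k + 1) * (‖μ‖ * ε) ≤ R) :
    ∃ x : ℕ → CPhase d, x 0 = x₀ ∧
      ∀ j : ℕ, 1 ≤ j → j ≤ k →
        x j ∈ D ∧
        ((x j).1, (x (j - 1)).2) ∈ D ∧
        (x (j - 1)).1 = (x j).1 + μ • qGrad d S ((x j).1, (x (j - 1)).2) ∧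
        (x j).2 = (x (j - 1)).2 + μ • pGrad d S ((x j).1, (x (j - 1)).2) ∧
        ‖x j - x (j - 1)‖ ≤ ‖μ‖ * ε := by
  have hr : 0 ≤ ‖μ‖ * ε := by positivity
  have hroom : ∀ j < k, (j + 2) * (‖μ‖ * ε) ≤ R := by
    intro j hj
    have hj' : (j : ℝ) + 2 ≤ k + 1 := by exact_mod_cast Nat.succ_le_succ hj
    exact (mul_le_mul_of_nonneg_right hj' hr).trans hμ
  have hstep : ∀ j < k, ∀ x ∈ closedBall x₀ (j * (‖μ‖ * ε)),
      ∃ y ∈ closedBall x (‖μ‖ * ε), GeneratingStep D S μ x y := by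
    intro j hj x hx
    refine exists_generatingStep hε hS hεub ((closedBall_subset_closedBall' ?_).trans hball)
    linarith [mem_closedBall.1 hx, hroom j hj]
  obtain ⟨x, hx₀, hx⟩ := exists_orbit_of_forall_exists_mem_closedBall hstep
  refine ⟨x, hx₀, fun j hj hjk ↦ ?_⟩
  obtain ⟨i, rfl⟩ := Nat.exists_eq_add_of_le' hj
  obtain ⟨hconf, hdist, hmem, hp, hq⟩ := hx i hjk
  have hxD : x (i + 1) ∈ D :=
    hball (closedBall_subset_closedBall (by linarith [hroom i hjk]) hconf)
  exact ⟨hxD, hmem, hp, hq, mem_closedBall_iff_norm.1 hdist⟩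

end GeneratingFunction

/-- **Confinement of iterates of the interpolated family.**
`D₀ ⊂ ℂ^{2d}`, `D` its `δ`-neighbourhood, `D₁` its `δ/2`-neighbourhood, `S` analytic on
`D` with `|∇S| ≤ ε` there.  For complex `μ`, `f_μ` is the map generated by
`P·q + μS(P,q)`, i.e. the orbit `(x_j)` of a point `x₀` satisfies
`(x_{j−1})_p = (x_j)_p + μ ∂_q S((x_j)_p, (x_{j−1})_q)` and
`(x_j)_q = (x_{j−1})_q + μ ∂_P S((x_j)_p, (x_{j−1})_q)`.
For every `x₀ ∈ D₁`, `k ≥ 1` and `|μ| ≤ μ_k = δ/(2ε(k+d))`, the iterates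
`x_j = f_μ^j(x₀)` are well defined for `0 ≤ j ≤ k`, lie in `D`, and satisfy
`|x_j − x_{j−1}| ≤ |μ| ε`. -/
theorem confinement_of_iterates_interpolated_family (d : ℕ) (hd : 1 ≤ d)
    (D₀ : Set (CPhase d)) (δ ε : ℝ) (hδ : 0 < δ) (hε : 0 < ε)
    (D D₁ : Set (CPhase d))
    (hD : D = Metric.cthickening δ D₀)
    (hD₁ : D₁ = Metric.cthickening (δ / 2) D₀)
    (S : CPhase d → ℂ) (hS : AnalyticOnNhd ℂ S D)
    (hεub : ∀ x ∈ D, max ‖pGrad d S x‖ ‖qGrad d S x‖ ≤ ε)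
    (x₀ : CPhase d) (hx₀ : x₀ ∈ D₁)
    (k : ℕ) (hk : 1 ≤ k)
    (μ : ℂ) (hμ : ‖μ‖ ≤ δ / (2 * ε * ((k : ℝ) + d))) :
    ∃ x : ℕ → CPhase d, x 0 = x₀ ∧
      ∀ j : ℕ, 1 ≤ j → j ≤ k →
        x j ∈ D ∧
        ((x j).1, (x (j - 1)).2) ∈ D ∧
        (x (j - 1)).1 = (x j).1 + μ • qGrad d S ((x j).1, (x (j - 1)).2) ∧
        (x j).2 = (x (j - 1)).2 + μ • pGrad d S ((x j).1, (x (j - 1)).2) ∧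
        ‖x j - x (j - 1)‖ ≤ ‖μ‖ * ε := by
  subst hD hD₁
  have hball : closedBall x₀ (δ / 2) ⊆ cthickening δ D₀ := by
    simpa only [add_halves] using
      closedBall_subset_cthickening_add (half_pos hδ).le (half_pos hδ).le hx₀
  have hroom : (k + 1) * (‖μ‖ * ε) ≤ δ / 2 := by
    have hd' : (1 : ℝ) ≤ d := by exact_mod_cast hd
    calc (k + 1) * (‖μ‖ * ε) ≤ (k + d) * (δ / (2 * ε * (k + d)) * ε) := by gcongr
      _ = δ / 2 := by field_simp
  exact confinement_of_iterates_interpolated_family_general hε.le hS hεub hball hroom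
end
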